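/- Let 0 ≤ β < 4 and α₀ > 0. Let a, b : ℝ⁴ → ℝ be continuous functions satisfying (A₁): a(x) ≥ a₀ > 0 and b(x) ≥ b₀ > 0 for all x. Let h : ℝ⁴ → ℝ be measurable with ‖h‖_{E*} := sup{ |∫_{ℝ⁴} h φ dx| : φ smooth with ‖φ‖_E = 1 } < ∞, and assume there exists a smooth compactly supported φ₀ with ∫_{ℝ⁴} h φ₀ dx ≠ 0. Let f : ℝ⁴ × ℝ → ℝ be continuous and satisfy (H₁): there exist b₁, b₂ > 0 and γ ≥ 1 with |f(x,s)| ≤ b₁|s| + b₂|s|^γ(e^{α₀ s²} − 1) for all (x,s). Fix ε > 0 and define J_ε(u) = (1/2)‖u‖_E² − ∫_{ℝ⁴} F(x,u)/|x|^β dx − ε∫_{ℝ⁴} h u dx, where F(x,s) = ∫₀^s f(x,t) dt. Then there exist τ > 0 and a smooth function v with ‖v‖_E = 1 such that J_ε(t v) < 0 for all 0 < t < τ; in particular inf{J_ε(u) : u smooth, ‖u‖_E ≤ τ} < 0. -/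

import Mathlib

/-!
On a ray `t ↦ t v` with `v` smooth and compactly supported, the quadratic part of `J_ε` is of
order `t²`. So is the nonlinear part: (H₁) with `γ ≥ 1` gives `|f x s| ≤ K |s|` for bounded `s`
(`abs_f_le`), hence `|F(x,s)| ≤ K s²` (`abs_Fprim_le`), and `v² / |x|^β` is integrable on `ℝ⁴`
because `β < 4` (`integrable_sq_div_norm_rpow`). The forcing term `-ε t ∫ h v` is linear in `t`,
so it dominates for small `t` as soon as `∫ h v > 0`. Such a `v` of unit energy is a multiple of
the given `φ₀`: the energy is finite, quadratic under scaling, and positive because `φ₀ ≠ 0` and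
`b > 0`; the sign of the multiple is that of `∫ h φ₀`.
-/

open MeasureTheory Real Filter Topology ENNReal

noncomputable section

/-- Four-dimensional Euclidean space with Lebesgue measure. -/
abbrev R4 : Type := EuclideanSpace ℝ (Fin 4)

/-- The Laplacian of `u : ℝ⁴ → ℝ`, as the sum of the pure second derivatives
along the coordinate directions. -/
noncomputable def lapl (u : R4 → ℝ) (x : R4) : ℝ :=
  ∑ i : Fin 4, iteratedFDeriv ℝ 2 u x ![EuclideanSpace.single i 1, EuclideanSpace.single i 1]

/-- The squared `E`-norm `∫ (|Δu|² + a|∇u|² + b u²) dx`, as an extended nonnegative real. -/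
noncomputable def enorm2 (a b : R4 → ℝ) (u : R4 → ℝ) : ℝ≥0∞ :=
  ∫⁻ x : R4, ENNReal.ofReal ((lapl u x) ^ 2 + a x * ‖gradient u x‖ ^ 2 + b x * (u x) ^ 2)

/-- The primitive `F(x, s) = ∫₀ˢ f(x, t) dt` of a nonlinearity `f`. -/
noncomputable def Fprim (f : R4 → ℝ → ℝ) (x : R4) (s : ℝ) : ℝ := ∫ t in (0:ℝ)..s, f x t

/-- The functional
`J_ε(u) = (1/2)∫(|Δu|² + a|∇u|² + b u²) dx − ∫ F(x,u)/|x|^β dx − ε ∫ h u dx`. -/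
noncomputable def Jfun (a b : R4 → ℝ) (β : ℝ) (f : R4 → ℝ → ℝ) (ε : ℝ) (h : R4 → ℝ)
    (u : R4 → ℝ) : ℝ :=
  (1 / 2) * (∫ x : R4, ((lapl u x) ^ 2 + a x * ‖gradient u x‖ ^ 2 + b x * (u x) ^ 2))
    - (∫ x : R4, Fprim f x (u x) / ‖x‖ ^ β)
    - ε * ∫ x : R4, h x * u x

/-- The pointwise energy density `|Δu|² + a|∇u|² + b u²`. -/
def eden (a b u : R4 → ℝ) (x : R4) : ℝ :=
  (lapl u x) ^ 2 + a x * ‖gradient u x‖ ^ 2 + b x * (u x) ^ 2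

lemma lapl_const_mul (c : ℝ) {u : R4 → ℝ} (hu : ContDiff ℝ (⊤ : ℕ∞) u) (x : R4) :
    lapl (fun y => c * u y) x = c * lapl u x := by
  have h2 : ContDiffAt ℝ (2 : ℕ) u x := (hu.of_le (WithTop.coe_le_coe.2 (le_top : (2 : ℕ∞) ≤ ⊤))).contDiffAt
  have := iteratedFDeriv_const_smul_apply' (a := c) h2
  simp only [smul_eq_mul] at this
  simp only [lapl, this, Finset.mul_sum]
  rfl

lemma gradient_const_mul (c : ℝ) {u : R4 → ℝ} (hu : ContDiff ℝ (⊤ : ℕ∞) u) (x : R4) :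
    gradient (fun y => c * u y) x = c • gradient u x := by
  have hd : DifferentiableAt ℝ u x := (hu.differentiable (by simp)) x
  simp only [gradient]
  rw [fderiv_const_mul hd, map_smulₛₗ]
  simp

lemma eden_const_mul (a b : R4 → ℝ) (c : ℝ) {u : R4 → ℝ} (hu : ContDiff ℝ (⊤ : ℕ∞) u) (x : R4) :
    eden a b (fun y => c * u y) x = c ^ 2 * eden a b u x := by
  simp only [eden, lapl_const_mul c hu, gradient_const_mul c hu, norm_smul, mul_pow,
    Real.norm_eq_abs, sq_abs]
  ring

lemma eden_nonneg {a b : R4 → ℝ} (ha : ∀ x, 0 < a x) (hb : ∀ x, 0 < b x) (u : R4 → ℝ) (x : R4) :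
    0 ≤ eden a b u x := by
  have := ha x
  have := hb x
  unfold eden
  positivity

lemma continuous_eden {a b u : R4 → ℝ} (ha : Continuous a) (hb : Continuous b)
    (hu : ContDiff ℝ (⊤ : ℕ∞) u) : Continuous (eden a b u) := by
  have h1 : Continuous (lapl u) := by
    unfold lapl
    refine continuous_finsetSum _ fun i _ => ?_
    have := hu.continuous_iteratedFDeriv (m := 2)
      (WithTop.coe_le_coe.2 (le_top : (2 : ℕ∞) ≤ ⊤))
    exact (ContinuousMultilinearMap.apply ℝ (fun _ : Fin 2 => R4) ℝ _).continuous.comp this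
  have h2 : Continuous (gradient u) := by
    have := hu.continuous_fderiv (by simp)
    exact (InnerProductSpace.toDual ℝ R4).symm.continuous.comp this
  have h3 := hu.continuous
  unfold eden
  fun_prop

lemma hasCompactSupport_eden (a b : R4 → ℝ) {u : R4 → ℝ} (hs : HasCompactSupport u) :
    HasCompactSupport (eden a b u) := by
  refine HasCompactSupport.intro hs fun x hx => ?_
  have h0 : u x = 0 := image_eq_zero_of_notMem_tsupport hx
  have h1 : fderiv ℝ u x = 0 := by
    by_contra hne
    exact hx (support_fderiv_subset ℝ hne)
  have h2 : iteratedFDeriv ℝ 2 u x = 0 := by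
    by_contra hne
    exact hx (support_iteratedFDeriv_subset 2 hne)
  simp [eden, lapl, gradient, h0, h1, h2]

lemma enorm2_eq {a b u : R4 → ℝ} (ha : ∀ x, 0 < a x) (hb : ∀ x, 0 < b x)
    (hi : Integrable (eden a b u)) :
    enorm2 a b u = ENNReal.ofReal (∫ x, eden a b u x) :=
  (ofReal_integral_eq_lintegral_ofReal hi (ae_of_all _ (eden_nonneg ha hb u))).symm

/-- On bounded sets of `s` the growth condition (H₁) with `γ ≥ 1` is a linear bound. -/
lemma abs_f_le {α₀ b₁ b₂ γ M : ℝ} (hα₀ : 0 < α₀) (hb₂ : 0 < b₂) (hγ : 1 ≤ γ)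
    {f : R4 → ℝ → ℝ}
    (hf : ∀ x : R4, ∀ s : ℝ,
      |f x s| ≤ b₁ * |s| + b₂ * |s| ^ γ * (Real.exp (α₀ * s ^ 2) - 1))
    (x : R4) {s : ℝ} (hs : |s| ≤ M) :
    |f x s| ≤ (b₁ + b₂ * M ^ (γ - 1) * (Real.exp (α₀ * M ^ 2) - 1)) * |s| := by
  have hsplit : |s| ^ γ = |s| ^ (γ - 1) * |s| := by
    rcases (abs_nonneg s).eq_or_lt with h0 | h0
    · rw [← h0, mul_zero, Real.zero_rpow (by linarith)]
    · rw [← Real.rpow_add_one h0.ne', sub_add_cancel]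
  have h1 : |s| ^ (γ - 1) ≤ M ^ (γ - 1) :=
    Real.rpow_le_rpow (abs_nonneg s) hs (by linarith)
  have hM : 0 ≤ M := (abs_nonneg s).trans hs
  have h2 : s ^ 2 ≤ M ^ 2 := sq_le_sq' (abs_le.1 hs).1 (abs_le.1 hs).2
  have h3 : Real.exp (α₀ * s ^ 2) - 1 ≤ Real.exp (α₀ * M ^ 2) - 1 := by gcongr
  have h4 : 0 ≤ Real.exp (α₀ * s ^ 2) - 1 := by
    have := Real.one_le_exp (show 0 ≤ α₀ * s ^ 2 by positivity)
    linarith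
  calc |f x s| ≤ b₁ * |s| + b₂ * |s| ^ γ * (Real.exp (α₀ * s ^ 2) - 1) := hf x s
    _ = b₁ * |s| + b₂ * (|s| ^ (γ - 1)) * (Real.exp (α₀ * s ^ 2) - 1) * |s| := by
        rw [hsplit]; ring
    _ ≤ b₁ * |s| + b₂ * (M ^ (γ - 1)) * (Real.exp (α₀ * M ^ 2) - 1) * |s| := by gcongr
    _ = _ := by ring

lemma abs_Fprim_le {f : R4 → ℝ → ℝ} {K M : ℝ} (hK : 0 ≤ K) {x : R4}
    (hf : ∀ s : ℝ, |s| ≤ M → |f x s| ≤ K * |s|) {s : ℝ} (hs : |s| ≤ M) :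
    |Fprim f x s| ≤ K * s ^ 2 := by
  have key : ∀ t ∈ Set.uIoc (0 : ℝ) s, ‖f x t‖ ≤ K * |s| := by
    intro t ht
    have hts : |t| ≤ |s| := by
      have := Set.abs_sub_left_of_mem_uIcc (Set.uIoc_subset_uIcc ht)
      simpa using this
    exact (hf t (hts.trans hs)).trans (by gcongr)
  have := intervalIntegral.norm_integral_le_of_norm_le_const key
  simp only [Real.norm_eq_abs, sub_zero] at this
  rw [mul_assoc, abs_mul_abs_self, ← sq] at this
  exact this

/-- Holds because the singular weight `|x|^{-β}` is locally integrable on `ℝ⁴` for `β < 4`. -/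
lemma integrable_sq_div_norm_rpow {β : ℝ} (hβ : β < 4) {v : R4 → ℝ} (hv : Continuous v)
    (hs : HasCompactSupport v) : Integrable (fun x => (v x) ^ 2 / ‖x‖ ^ β) := by
  have hloc : LocallyIntegrable (fun x : R4 => ‖x‖ ^ (-β)) volume := by
    refine locallyIntegrable_of_norm_le_rpow (C := 1) (α := β) (by simp) (by simpa using hβ)
      (ae_of_all _ fun x => ?_) (measurable_norm.pow_const _).aestronglyMeasurable
    rw [Real.norm_of_nonneg (by positivity), one_mul]
  have hs2 : HasCompactSupport (fun x => (v x) ^ 2) :=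
    hs.comp_left (g := fun y : ℝ => y ^ 2) (by simp)
  refine (hloc.integrable_smul_left_of_hasCompactSupport (hv.pow 2) hs2).congr
    (ae_of_all _ fun x => ?_)
  simp [Real.rpow_neg, div_eq_mul_inv]

/-- Lemma 3.3: if the forcing term `h` is nontrivial, then for each `ε > 0` the functional
`J_ε` is negative along a ray near the origin: there are `τ > 0` and a smooth `v` with
`‖v‖_E = 1` such that `J_ε(tv) < 0` for all `0 < t < τ`. -/
theorem stmt_14 (β α₀ : ℝ) (hβ0 : 0 ≤ β) (hβ4 : β < 4) (hα₀ : 0 < α₀)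
    (a b : R4 → ℝ) (ha : Continuous a) (hb : Continuous b)
    (a₀ b₀ : ℝ) (ha₀ : 0 < a₀) (hb₀ : 0 < b₀)
    (haa : ∀ x, a₀ ≤ a x) (hbb : ∀ x, b₀ ≤ b x)
    (h : R4 → ℝ) (hhm : Measurable h)
    (Ch : ℝ) (hCh : ∀ φ : R4 → ℝ, ContDiff ℝ (⊤ : ℕ∞) φ → enorm2 a b φ = 1 →
      |∫ x : R4, h x * φ x| ≤ Ch)
    (hne : ∃ φ₀ : R4 → ℝ, ContDiff ℝ (⊤ : ℕ∞) φ₀ ∧ HasCompactSupport φ₀ ∧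
      (∫ x : R4, h x * φ₀ x) ≠ 0)
    (f : R4 → ℝ → ℝ) (hf : Continuous (Function.uncurry f))
    (H1 : ∃ b₁ b₂ γ : ℝ, 0 < b₁ ∧ 0 < b₂ ∧ 1 ≤ γ ∧ ∀ x : R4, ∀ s : ℝ,
      |f x s| ≤ b₁ * |s| + b₂ * |s| ^ γ * (Real.exp (α₀ * s ^ 2) - 1))
    (ε : ℝ) (hε : 0 < ε) :
    ∃ τ : ℝ, 0 < τ ∧ ∃ v : R4 → ℝ, ContDiff ℝ (⊤ : ℕ∞) v ∧ enorm2 a b v = 1 ∧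
      ∀ t : ℝ, 0 < t → t < τ → Jfun a b β f ε h (fun x => t * v x) < 0 := by
  obtain ⟨φ₀, hφ, hφs, hφne⟩ := hne
  obtain ⟨b₁, b₂, γ, hb₁, hb₂, hγ, hgrow⟩ := H1
  have hap : ∀ x, 0 < a x := fun x => ha₀.trans_le (haa x)
  have hbp : ∀ x, 0 < b x := fun x => hb₀.trans_le (hbb x)
  have hint : ∀ u : R4 → ℝ, ContDiff ℝ (⊤ : ℕ∞) u → HasCompactSupport u →
      Integrable (eden a b u) := fun u hu hus =>
    (continuous_eden ha hb hu).integrable_of_hasCompactSupport (hasCompactSupport_eden a b hus)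
  have hNpos : 0 < ∫ x, eden a b φ₀ x := by
    obtain ⟨x₀, hx₀⟩ : ∃ x, φ₀ x ≠ 0 := by
      by_contra! hz
      exact hφne (by simp [hz])
    refine (continuous_eden ha hb hφ).integral_pos_of_hasCompactSupport_nonneg_nonzero
      (hasCompactSupport_eden a b hφs) (fun x => eden_nonneg hap hbp φ₀ x) (x := x₀) ?_
    have h1 := hap x₀
    have h2 := hbp x₀
    have : 0 < eden a b φ₀ x₀ := by
      unfold eden
      positivity
    exact this.ne'
  -- `c² = 1 / ‖φ₀‖_E²`, and `c` has the sign of `∫ h φ₀`.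
  obtain ⟨c, hc2, hcI⟩ : ∃ c : ℝ, c ^ 2 * (∫ x, eden a b φ₀ x) = 1 ∧
      0 < c * ∫ x, h x * φ₀ x := by
    have hsq : 0 < √(∫ x, eden a b φ₀ x) := Real.sqrt_pos.2 hNpos
    have hss := Real.sq_sqrt hNpos.le
    rcases hφne.lt_or_gt with hneg | hpos
    · refine ⟨-(√(∫ x, eden a b φ₀ x))⁻¹, ?_, ?_⟩
      · rw [neg_sq, inv_pow, hss, inv_mul_cancel₀ hNpos.ne']
      · exact mul_pos_of_neg_of_neg (neg_neg_of_pos (inv_pos.2 hsq)) hneg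
    · refine ⟨(√(∫ x, eden a b φ₀ x))⁻¹, ?_, ?_⟩
      · rw [inv_pow, hss, inv_mul_cancel₀ hNpos.ne']
      · exact mul_pos (inv_pos.2 hsq) hpos
  set v : R4 → ℝ := fun x => c * φ₀ x with hvdef
  have hv : ContDiff ℝ (⊤ : ℕ∞) v := contDiff_const.mul hφ
  have hvs : HasCompactSupport v := hφs.mul_left
  have hv1 : ∫ x, eden a b v x = 1 := by
    simp only [hvdef, eden_const_mul a b c hφ, integral_const_mul, hc2]
  have hI : 0 < ∫ x, h x * v x := by
    have : ∀ x, h x * v x = c * (h x * φ₀ x) := fun x => by simp only [hvdef]; ring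
    simp only [this, integral_const_mul]
    exact hcI
  obtain ⟨M, hM⟩ := hv.continuous.bounded_above_of_compact_support hvs
  have hM0 : 0 ≤ M := (norm_nonneg _).trans (hM 0)
  set K : ℝ := b₁ + b₂ * M ^ (γ - 1) * (Real.exp (α₀ * M ^ 2) - 1) with hKdef
  have hK : 0 ≤ K := by
    have := Real.one_le_exp (show 0 ≤ α₀ * M ^ 2 by positivity)
    have : 0 ≤ Real.exp (α₀ * M ^ 2) - 1 := by linarith
    positivity
  set W : ℝ := ∫ x, (v x) ^ 2 / ‖x‖ ^ β with hWdef
  have hW : 0 ≤ W := integral_nonneg fun x => by positivity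
  set I : ℝ := ∫ x, h x * v x with hIdef
  -- For `0 < t ≤ 1`, `J_ε(tv) ≤ t² (1/2 + K W) - ε t I`.
  refine ⟨min 1 (ε * I / (1 / 2 + K * W)), by positivity, v, hv, ?_, fun t ht htτ => ?_⟩
  · rw [enorm2_eq hap hbp (hint v hv hvs), hv1, ENNReal.ofReal_one]
  have ht1 : t < 1 := htτ.trans_le (min_le_left _ _)
  have ht2 : t * (1 / 2 + K * W) < ε * I :=
    (lt_div_iff₀ (by positivity)).1 (htτ.trans_le (min_le_right _ _))
  have hE : (∫ x, eden a b (fun x => t * v x) x) = t ^ 2 := by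
    simp only [eden_const_mul a b t hv, integral_const_mul, hv1, mul_one]
  have hH : (∫ x, h x * (t * v x)) = t * I := by
    rw [hIdef, ← integral_const_mul]
    congr 1
    ext x
    ring
  have hF : |∫ x, Fprim f x (t * v x) / ‖x‖ ^ β| ≤ t ^ 2 * K * W := by
    rw [hWdef, ← integral_const_mul]
    refine norm_integral_le_of_norm_le (G := ℝ)
      ((integrable_sq_div_norm_rpow hβ4 hv.continuous hvs).const_mul _) (ae_of_all _ fun x => ?_)
    have htv : |t * v x| ≤ M := by
      rw [abs_mul, abs_of_pos ht]
      exact (mul_le_of_le_one_left (abs_nonneg _) ht1.le).trans (hM x)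
    have hb := abs_Fprim_le hK (fun s hs => abs_f_le hα₀ hb₂ hγ hgrow x hs) htv
    have hr : 0 ≤ ‖x‖ ^ β := by positivity
    rw [Real.norm_eq_abs, abs_div, abs_of_nonneg hr, ← mul_div_assoc]
    refine div_le_div_of_nonneg_right (hb.trans_eq ?_) hr
    ring
  have hJ : Jfun a b β f ε h (fun x => t * v x)
      = (1 / 2) * t ^ 2 - (∫ x, Fprim f x (t * v x) / ‖x‖ ^ β) - ε * (t * I) := by
    rw [← hE, ← hH]
    rfl
  rw [hJ]
  have h1 := (abs_le.1 hF).1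
  have h2 := mul_lt_mul_of_pos_left ht2 ht
  nlinarith
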